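/- Let p, q be continuous and positive on (0,1], p ∈ C[0,1] ∩ C¹(0,1] with 1/p ∈ L¹(0,1], and suppose y ∈ C[0,1] ∩ C²(0,1] solves −(p(x)y′(x))′ = q(x) f(x, y(x)) on (0,1) with boundary conditions y(0) = δ₁ and α₁ y(1) + β₁ y′(1) = γ₁, where μ = α₁h(1) + β₁/p(1) ≠ 0 and h(x) = ∫₀ˣ dt/p(t). Assume moreover that ∫₀¹ (1/p(x)) ∫ₓ¹ q(s) ds dx < ∞ and f is continuous and bounded along the solution. Then y satisfies the Fredholm integral equation y(x) = g(x) + ∫₀¹ G(x,s) q(s) f(s, y(s)) ds, where g(x) = δ₁ + ((γ₁ − δ₁α₁)/μ) h(x) and G(x,s) = h(min(x,s))[1 − α₁ h(max(x,s))/μ]. -/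

import Mathlib

open MeasureTheory

open Set Filter Topology

/-!
Let `F` be the right-hand side `q f(·, y)`, let `h x = ∫₀ˣ 1 / p` and let `c = p(1) y'(1)`.
Integrating the equation from `x` to `1` gives `p y' = c + ∫ₓ¹ F`; dividing by `p`, integrating
from `0` to `x` and exchanging the two integrals gives
`y x = y 0 + c h x + ∫₀¹ h (min x s) F s ds`. The double integral converges absolutely by Tonelli's
theorem because `(1 / p) ∫ₓ¹ |F|` is integrable, so the singularities of `1 / p` and `F` at `0` are
harmless. Evaluating at `1`, the Robin condition determines `c`, and since
`h (min x s) * h (max x s) = h x * h s`, substituting `c` turns the kernel `h (min x s)` into the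
Green function.
-/

section LocallyIntegrable

variable {E : Type*} [NormedAddCommGroup E] {μ : Measure ℝ} {a b : ℝ}

theorem intervalIntegrable_of_locallyIntegrableOn {F : ℝ → E} {s : Set ℝ} [s.OrdConnected]
    (hF : LocallyIntegrableOn F s μ) {x y : ℝ} (hx : x ∈ s) (hy : y ∈ s) :
    IntervalIntegrable F μ x y :=
  (hF.integrableOn_compact_subset (OrdConnected.uIcc_subset ‹_› hx hy)
    isCompact_uIcc).intervalIntegrable

theorem continuousOn_integral_left_of_locallyIntegrableOn [NormedSpace ℝ E] [NullSingletonClass μ]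
    {F : ℝ → E} (hF : LocallyIntegrableOn F (Ioc a b) μ) :
    ContinuousOn (fun x => ∫ s in x..b, F s ∂μ) (Ioc a b) := by
  intro x hx
  obtain ⟨c, hac, hcx⟩ := exists_between hx.1
  have hcb : c ≤ b := hcx.le.trans hx.2
  have hcont : ContinuousOn (fun x => ∫ s in x..b, F s ∂μ) (Icc c b) := by
    rw [← uIcc_of_le hcb]
    refine intervalIntegral.continuousOn_primitive_interval_left
      (hF.integrableOn_compact_subset ?_ isCompact_uIcc)
    rw [uIcc_of_le hcb]
    exact fun s hs => ⟨hac.trans_le hs.1, hs.2⟩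
  refine (hcont x ⟨hcx.le, hx.2⟩).mono_of_mem_nhdsWithin ?_
  filter_upwards [self_mem_nhdsWithin, mem_nhdsWithin_of_mem_nhds (Ici_mem_nhds hcx)]
    with u hu hcu using ⟨hcu, hu.2⟩

theorem intervalIntegrable_mul_integral_abs_of_abs_le {w F q : ℝ → ℝ} {C : ℝ} (hab : a ≤ b)
    (hw : AEStronglyMeasurable w (volume.restrict (Ioc a b)))
    (hF : LocallyIntegrableOn F (Ioc a b)) (hq : LocallyIntegrableOn q (Ioc a b))
    (hFq : ∀ x ∈ Ioc a b, |F x| ≤ C * q x)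
    (hwq : IntervalIntegrable (fun x => w x * ∫ s in x..b, q s) volume a b) :
    IntervalIntegrable (fun x => w x * ∫ s in x..b, |F s|) volume a b := by
  have hFabs : LocallyIntegrableOn (fun s => |F s|) (Ioc a b) := hF.norm
  refine (hwq.const_mul C).mono_fun ?_ ?_ <;> rw [uIoc_of_le hab]
  · exact hw.mul ((continuousOn_integral_left_of_locallyIntegrableOn hFabs).aestronglyMeasurable
      measurableSet_Ioc)
  · filter_upwards [ae_restrict_mem measurableSet_Ioc] with x hx
    have hb : b ∈ Ioc a b := right_mem_Ioc.2 (hx.1.trans_le hx.2)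
    have hnonneg : 0 ≤ ∫ s in x..b, |F s| :=
      intervalIntegral.integral_nonneg hx.2 fun s _ => abs_nonneg (F s)
    have hle : ∫ s in x..b, |F s| ≤ C * ∫ s in x..b, q s := by
      rw [← intervalIntegral.integral_const_mul]
      exact intervalIntegral.integral_mono_on hx.2
        (intervalIntegrable_of_locallyIntegrableOn hFabs hx hb)
        ((intervalIntegrable_of_locallyIntegrableOn hq hx hb).const_mul C)
        fun s hs => hFq s ⟨hx.1.trans_le hs.1, hs.2⟩
    rw [mul_left_comm, norm_mul, norm_mul]
    exact mul_le_mul_of_nonneg_left (abs_le_abs_of_nonneg hnonneg hle) (norm_nonneg _)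

end LocallyIntegrable

section TriangleKernel

variable {w F : ℝ → ℝ} {a b x : ℝ}

/-- The kernel `w t * F s` supported on the triangle `t ≤ s`, whose two iterated integrals
express the exchange of the order of integration in `∫ t, w t * ∫ s in t..b, F s`. -/
noncomputable def triangleKernel (w F : ℝ → ℝ) (t s : ℝ) : ℝ :=
  (Iic s).indicator (fun u => w u * F s) t

theorem triangleKernel_eq_indicator_Ici (w F : ℝ → ℝ) (t s : ℝ) :
    triangleKernel w F t s = (Ici t).indicator (fun u => w t * F u) s := by
  simp only [triangleKernel, indicator_apply, mem_Iic, mem_Ici]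

theorem norm_triangleKernel (w F : ℝ → ℝ) (t s : ℝ) :
    ‖triangleKernel w F t s‖ = triangleKernel (fun u => |w u|) (fun u => |F u|) t s := by
  simp only [triangleKernel, norm_indicator_eq_indicator_norm, Real.norm_eq_abs, abs_mul]

theorem integral_triangleKernel_right {t : ℝ} (ht : t ∈ Ioc a b) :
    ∫ s in Ioc a b, triangleKernel w F t s = w t * ∫ s in t..b, F s := by
  have hinter : Ioc a b ∩ Ici t = Icc t b := by
    ext s
    exact ⟨fun hs => ⟨hs.2, hs.1.2⟩, fun hs => ⟨⟨ht.1.trans_le hs.1, hs.2⟩, hs.1⟩⟩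
  simp only [triangleKernel_eq_indicator_Ici]
  rw [setIntegral_indicator measurableSet_Ici, hinter, integral_Icc_eq_integral_Ioc,
    integral_const_mul, intervalIntegral.integral_of_le ht.2]

theorem integral_triangleKernel_left (hax : a ≤ x) {s : ℝ} (hs : a ≤ s) :
    ∫ t in Ioc a x, triangleKernel w F t s = (∫ t in a..min x s, w t) * F s := by
  simp only [triangleKernel]
  rw [setIntegral_indicator measurableSet_Iic, Ioc_inter_Iic, integral_mul_const,
    intervalIntegral.integral_of_le (le_min hax hs)]

theorem integrableOn_triangleKernel_right (hF : LocallyIntegrableOn F (Ioc a b)) {t : ℝ}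
    (ht : t ∈ Ioc a b) : IntegrableOn (triangleKernel w F t) (Ioc a b) := by
  simp only [funext (triangleKernel_eq_indicator_Ici w F t)]
  rw [integrableOn_indicator_iff measurableSet_Ici]
  have hIcc : IntegrableOn F (Icc t b) := hF.integrableOn_compact_subset
    (fun s hs => ⟨ht.1.trans_le hs.1, hs.2⟩) isCompact_Icc
  exact IntegrableOn.mono_set (hIcc.const_mul (w t)) fun s hs => ⟨hs.1, hs.2.2⟩

theorem aestronglyMeasurable_triangleKernel {μ ν : Measure ℝ} [SFinite μ] [SFinite ν]
    (hw : AEStronglyMeasurable w μ) (hF : AEStronglyMeasurable F ν) :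
    AEStronglyMeasurable (Function.uncurry (triangleKernel w F)) (μ.prod ν) :=
  (hw.comp_fst.mul hF.comp_snd).indicator (measurableSet_le measurable_fst measurable_snd)

theorem integrable_triangleKernel (hx : x ∈ Icc a b)
    (hw : AEStronglyMeasurable w (volume.restrict (Ioc a x)))
    (hF : LocallyIntegrableOn F (Ioc a b))
    (hwF : IntervalIntegrable (fun t => w t * ∫ s in t..b, |F s|) volume a x) :
    Integrable (Function.uncurry (triangleKernel w F))
      ((volume.restrict (Ioc a x)).prod (volume.restrict (Ioc a b))) := by
  have hsub : Ioc a x ⊆ Ioc a b := Ioc_subset_Ioc_right hx.2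
  rw [integrable_prod_iff (aestronglyMeasurable_triangleKernel hw hF.aestronglyMeasurable)]
  refine ⟨ae_restrict_of_forall_mem measurableSet_Ioc fun t ht =>
    integrableOn_triangleKernel_right hF (hsub ht), ?_⟩
  rw [intervalIntegrable_iff_integrableOn_Ioc_of_le hx.1] at hwF
  refine hwF.norm.congr (ae_restrict_of_forall_mem measurableSet_Ioc fun t ht => ?_)
  have hnonneg : 0 ≤ ∫ s in t..b, |F s| :=
    intervalIntegral.integral_nonneg (hsub ht).2 fun s _ => abs_nonneg (F s)
  simp only [Function.uncurry_apply_pair, norm_triangleKernel]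
  rw [integral_triangleKernel_right (hsub ht), norm_mul, Real.norm_of_nonneg hnonneg,
    Real.norm_eq_abs]

theorem intervalIntegrable_mul_integral_left (hx : x ∈ Icc a b)
    (hw : AEStronglyMeasurable w (volume.restrict (Ioc a x)))
    (hF : LocallyIntegrableOn F (Ioc a b))
    (hwF : IntervalIntegrable (fun t => w t * ∫ s in t..b, |F s|) volume a x) :
    IntervalIntegrable (fun t => w t * ∫ s in t..b, F s) volume a x := by
  rw [intervalIntegrable_iff_integrableOn_Ioc_of_le hx.1]
  exact (integrable_triangleKernel hx hw hF hwF).integral_prod_left.congr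
    (ae_restrict_of_forall_mem measurableSet_Ioc fun t ht =>
      integral_triangleKernel_right (Ioc_subset_Ioc_right hx.2 ht))

theorem intervalIntegrable_integral_min_mul (hx : x ∈ Icc a b)
    (hw : AEStronglyMeasurable w (volume.restrict (Ioc a x)))
    (hF : LocallyIntegrableOn F (Ioc a b))
    (hwF : IntervalIntegrable (fun t => w t * ∫ s in t..b, |F s|) volume a x) :
    IntervalIntegrable (fun s => (∫ t in a..min x s, w t) * F s) volume a b := by
  rw [intervalIntegrable_iff_integrableOn_Ioc_of_le (hx.1.trans hx.2)]
  exact (integrable_triangleKernel hx hw hF hwF).integral_prod_right.congr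
    (ae_restrict_of_forall_mem measurableSet_Ioc fun s hs =>
      integral_triangleKernel_left hx.1 hs.1.le)

theorem integral_mul_integral_left_eq_integral_min_mul (hx : x ∈ Icc a b)
    (hw : AEStronglyMeasurable w (volume.restrict (Ioc a x)))
    (hF : LocallyIntegrableOn F (Ioc a b))
    (hwF : IntervalIntegrable (fun t => w t * ∫ s in t..b, |F s|) volume a x) :
    ∫ t in a..x, w t * ∫ s in t..b, F s = ∫ s in a..b, (∫ t in a..min x s, w t) * F s := by
  rw [intervalIntegral.integral_of_le hx.1, intervalIntegral.integral_of_le (hx.1.trans hx.2)]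
  calc ∫ t in Ioc a x, w t * ∫ s in t..b, F s
      = ∫ t in Ioc a x, ∫ s in Ioc a b, triangleKernel w F t s :=
        setIntegral_congr_fun measurableSet_Ioc fun t ht =>
          (integral_triangleKernel_right (Ioc_subset_Ioc_right hx.2 ht)).symm
    _ = ∫ s in Ioc a b, ∫ t in Ioc a x, triangleKernel w F t s :=
        integral_integral_swap (integrable_triangleKernel hx hw hF hwF)
    _ = ∫ s in Ioc a b, (∫ t in a..min x s, w t) * F s :=
        setIntegral_congr_fun measurableSet_Ioc fun s hs =>
          integral_triangleKernel_left hx.1 hs.1.le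

end TriangleKernel

theorem deriv_eq_of_tendsto_deriv_left {E : Type*} [NormedAddCommGroup E] [NormedSpace ℝ E]
    {y : ℝ → E} {b : ℝ} {L : E} (hyd : ∀ᶠ x in 𝓝[<] b, DifferentiableAt ℝ y x)
    (hyb : DifferentiableAt ℝ y b) (hL : Tendsto (deriv y) (𝓝[<] b) (𝓝 L)) : deriv y b = L :=
  (uniqueDiffOn_Iic b b self_mem_Iic).eq_deriv _ hyb.hasDerivAt.hasDerivWithinAt <|
    hasDerivWithinAt_Iic_of_tendsto_deriv (s := {x | DifferentiableAt ℝ y x})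
      (fun _ hx => DifferentiableAt.differentiableWithinAt hx)
      hyb.continuousAt.continuousWithinAt hyd hL

theorem mul_deriv_eq_of_tendsto_mul_deriv_left {p y : ℝ → ℝ} {b L : ℝ}
    (hpb : ContinuousWithinAt p (Iio b) b) (hpb0 : p b ≠ 0)
    (hyd : ∀ᶠ x in 𝓝[<] b, DifferentiableAt ℝ y x) (hyb : DifferentiableAt ℝ y b)
    (hL : Tendsto (fun x => p x * deriv y x) (𝓝[<] b) (𝓝 L)) : p b * deriv y b = L := by
  have hderiv : Tendsto (deriv y) (𝓝[<] b) (𝓝 (L / p b)) := by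
    refine (hL.div hpb hpb0).congr' ?_
    filter_upwards [hpb.eventually_ne hpb0] with x hx using mul_div_cancel_left₀ _ hx
  rw [deriv_eq_of_tendsto_deriv_left hyd hyb hderiv, mul_div_cancel₀ _ hpb0]

/-- A solution `y ∈ C[a, b]`, differentiable on `(a, b]`, of the Sturm-Liouville equation
`-(p y')' = F` on `(a, b)`. Only the flux `p y'`, not `y'` itself, is required to be
differentiable. -/
structure IsSturmLiouvilleSolution (p F y : ℝ → ℝ) (a b : ℝ) : Prop where
  continuousOn : ContinuousOn y (Icc a b)
  differentiableAt : ∀ x ∈ Ioc a b, DifferentiableAt ℝ y x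
  hasDerivAt_flux : ∀ x ∈ Ioo a b, HasDerivAt (fun t => p t * deriv y t) (-F x) x

namespace IsSturmLiouvilleSolution

variable {p F y : ℝ → ℝ} {a b x : ℝ}

theorem tendsto_flux (hy : IsSturmLiouvilleSolution p F y a b)
    (hF : LocallyIntegrableOn F (Ioc a b)) (hx : x ∈ Ioo a b) :
    Tendsto (fun t => p t * deriv y t) (𝓝[<] b) (𝓝 (p x * deriv y x - ∫ s in x..b, F s)) := by
  have hxI : x ∈ Ioc a b := Ioo_subset_Ioc_self hx
  have hb : b ∈ Ioc a b := right_mem_Ioc.2 (hx.1.trans hx.2)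
  have htail : Tendsto (fun t => ∫ s in t..b, F s) (𝓝[<] b) (𝓝 0) := by
    have hcont := (continuousOn_integral_left_of_locallyIntegrableOn hF b hb).mono
      Ioo_subset_Ioc_self
    rwa [ContinuousWithinAt, nhdsWithin_Ioo_eq_nhdsLT (hx.1.trans hx.2),
      intervalIntegral.integral_same] at hcont
  have hlim := htail.const_add (p x * deriv y x - ∫ s in x..b, F s)
  rw [add_zero] at hlim
  refine hlim.congr' ?_
  filter_upwards [Ioo_mem_nhdsLT hx.2] with t ht
  have htI : t ∈ Ioc a b := ⟨hx.1.trans ht.1, ht.2.le⟩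
  have hflux : ∫ s in x..t, -F s = p t * deriv y t - p x * deriv y x :=
    intervalIntegral.integral_eq_sub_of_hasDerivAt
      (fun s hs => by
        rw [uIcc_of_le ht.1.le] at hs
        exact hy.hasDerivAt_flux s ⟨hx.1.trans_le hs.1, hs.2.trans_lt ht.2⟩)
      (intervalIntegrable_of_locallyIntegrableOn hF hxI htI).neg
  rw [intervalIntegral.integral_neg] at hflux
  rw [← intervalIntegral.integral_add_adjacent_intervals
    (intervalIntegrable_of_locallyIntegrableOn hF hxI htI)
    (intervalIntegrable_of_locallyIntegrableOn hF htI hb)]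
  linarith

theorem flux_eq_add_integral (hy : IsSturmLiouvilleSolution p F y a b)
    (hpb : ContinuousWithinAt p (Iio b) b) (hpb0 : p b ≠ 0)
    (hF : LocallyIntegrableOn F (Ioc a b)) (hx : x ∈ Ioo a b) :
    p x * deriv y x = p b * deriv y b + ∫ s in x..b, F s := by
  have hab : a < b := hx.1.trans hx.2
  have hdiff : ∀ᶠ t in 𝓝[<] b, DifferentiableAt ℝ y t := by
    filter_upwards [Ioo_mem_nhdsLT hab] with t ht
      using hy.differentiableAt t (Ioo_subset_Ioc_self ht)
  rw [mul_deriv_eq_of_tendsto_mul_deriv_left hpb hpb0 hdiff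
    (hy.differentiableAt b (right_mem_Ioc.2 hab)) (hy.tendsto_flux hF hx), sub_add_cancel]

theorem eq_add_flux_mul_add_integral_min (hy : IsSturmLiouvilleSolution p F y a b)
    (hpb : ContinuousWithinAt p (Iio b) b) (hp0 : ∀ x ∈ Ioc a b, p x ≠ 0)
    (hint : IntervalIntegrable (fun t => 1 / p t) volume a b)
    (hF : LocallyIntegrableOn F (Ioc a b))
    (hpF : IntervalIntegrable (fun t => 1 / p t * ∫ s in t..b, |F s|) volume a b)
    (hx : x ∈ Icc a b) :
    y x = y a + p b * deriv y b * (∫ t in a..x, 1 / p t) +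
      ∫ s in a..b, (∫ t in a..min x s, 1 / p t) * F s := by
  have hsub : uIcc a x ⊆ uIcc a b := by
    rw [uIcc_of_le hx.1, uIcc_of_le (hx.1.trans hx.2)]
    exact Icc_subset_Icc_right hx.2
  have hintx := hint.mono_set hsub
  have hpFx := hpF.mono_set hsub
  have hmeas : AEStronglyMeasurable (fun t => 1 / p t) (volume.restrict (Ioc a x)) :=
    hintx.1.aestronglyMeasurable
  have hc := hintx.const_mul (p b * deriv y b)
  have htail := intervalIntegrable_mul_integral_left hx hmeas hF hpFx
  have hderiv : ∀ t ∈ Ioo a x, HasDerivAt y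
      (p b * deriv y b * (1 / p t) + 1 / p t * ∫ s in t..b, F s) t := fun t ht => by
    have htI : t ∈ Ioo a b := ⟨ht.1, ht.2.trans_le hx.2⟩
    have hpt : p t ≠ 0 := hp0 t (Ioo_subset_Ioc_self htI)
    refine (hy.differentiableAt t (Ioo_subset_Ioc_self htI)).hasDerivAt.congr_deriv ?_
    rw [mul_comm (1 / p t), ← add_mul, ← hy.flux_eq_add_integral hpb
      (hp0 b (right_mem_Ioc.2 (htI.1.trans htI.2))) hF htI, mul_one_div, mul_div_cancel_left₀ _ hpt]
  have hftc := intervalIntegral.integral_eq_sub_of_hasDerivAt_of_le hx.1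
    (hy.continuousOn.mono (Icc_subset_Icc_right hx.2)) hderiv (hc.add htail)
  rw [intervalIntegral.integral_add hc htail, intervalIntegral.integral_const_mul,
    integral_mul_integral_left_eq_integral_min_mul hx hmeas hF hpFx] at hftc
  linarith

end IsSturmLiouvilleSolution

/-- The Green function of `-(p y')'` under a homogeneous Dirichlet condition at the left endpoint
and a Robin condition `α y + β y' = 0` at the right endpoint `b`, in terms of the primitive `h` of
`1 / p` and of `μ = α h(b) + β / p(b)`. -/
noncomputable def dirichletRobinGreen (h : ℝ → ℝ) (α μ x s : ℝ) : ℝ :=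
  h (min x s) * (1 - α * h (max x s) / μ)

theorem dirichletRobinGreen_eq_sub (h : ℝ → ℝ) (α μ x s : ℝ) :
    dirichletRobinGreen h α μ x s = h (min x s) - α / μ * h x * h s := by
  rcases le_total x s with hxs | hsx
  · rw [dirichletRobinGreen, min_eq_left hxs, max_eq_right hxs]
    ring
  · rw [dirichletRobinGreen, min_eq_right hsx, max_eq_left hsx]
    ring

theorem integral_dirichletRobinGreen_mul {h F : ℝ → ℝ} {a b x : ℝ} (α μ : ℝ)
    (hmin : IntervalIntegrable (fun s => h (min x s) * F s) volume a b)
    (hhF : IntervalIntegrable (fun s => h s * F s) volume a b) :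
    ∫ s in a..b, dirichletRobinGreen h α μ x s * F s =
      (∫ s in a..b, h (min x s) * F s) - α / μ * h x * ∫ s in a..b, h s * F s := by
  simp only [dirichletRobinGreen_eq_sub, sub_mul, mul_assoc _ (h _) (F _)]
  rw [intervalIntegral.integral_sub hmin (hhF.const_mul _), intervalIntegral.integral_const_mul]

theorem integral_min_right_mul {h F : ℝ → ℝ} {a b : ℝ} (hab : a ≤ b) :
    ∫ s in a..b, h (min b s) * F s = ∫ s in a..b, h s * F s :=
  intervalIntegral.integral_congr fun s hs => by
    rw [uIcc_of_le hab] at hs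
    simp only [min_eq_right hs.2]

theorem IsSturmLiouvilleSolution.flux_eq_of_robin {p F y h : ℝ → ℝ} {a b α β γ μ : ℝ}
    (hab : a < b) (hpb : ContinuousWithinAt p (Iio b) b) (hp0 : ∀ x ∈ Ioc a b, p x ≠ 0)
    (hint : IntervalIntegrable (fun t => 1 / p t) volume a b)
    (hF : LocallyIntegrableOn F (Ioc a b))
    (hpF : IntervalIntegrable (fun x => 1 / p x * ∫ s in x..b, |F s|) volume a b)
    (hh : ∀ x, h x = ∫ t in a..x, 1 / p t) (hμ : μ = α * h b + β / p b) (hμ0 : μ ≠ 0)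
    (hy : IsSturmLiouvilleSolution p F y a b) (hbc : α * y b + β * deriv y b = γ) :
    p b * deriv y b = (γ - y a * α - α * ∫ s in a..b, h s * F s) / μ := by
  have hpb0 : p b ≠ 0 := hp0 b (right_mem_Ioc.2 hab)
  have hyb : y b = y a + p b * deriv y b * h b + ∫ s in a..b, h (min b s) * F s := by
    simpa only [← hh] using
      hy.eq_add_flux_mul_add_integral_min hpb hp0 hint hF hpF (right_mem_Icc.2 hab.le)
  rw [integral_min_right_mul hab.le] at hyb
  rw [eq_div_iff hμ0, hμ, ← hbc, hyb]
  field_simp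
  ring

theorem solution_satisfies_fredholm_dirichlet_robin_general {p F y h : ℝ → ℝ}
    {a b α β γ μ : ℝ} (hab : a < b) (hpb : ContinuousWithinAt p (Iio b) b)
    (hp0 : ∀ x ∈ Ioc a b, p x ≠ 0)
    (hint : IntervalIntegrable (fun t => 1 / p t) volume a b)
    (hF : LocallyIntegrableOn F (Ioc a b))
    (hpF : IntervalIntegrable (fun x => 1 / p x * ∫ s in x..b, |F s|) volume a b)
    (hh : ∀ x, h x = ∫ t in a..x, 1 / p t) (hμ : μ = α * h b + β / p b) (hμ0 : μ ≠ 0)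
    (hy : IsSturmLiouvilleSolution p F y a b) (hbc : α * y b + β * deriv y b = γ) :
    ∀ x ∈ Icc a b, y x = y a + (γ - y a * α) / μ * h x +
      ∫ s in a..b, dirichletRobinGreen h α μ x s * F s := by
  intro x hx
  have hmeas := hint.1.aestronglyMeasurable
  have hmin : ∀ z ∈ Icc a b, IntervalIntegrable (fun s => h (min z s) * F s) volume a b :=
    fun z hz => by
      simpa only [← hh] using intervalIntegrable_integral_min_mul hz
        (hmeas.mono_set (Ioc_subset_Ioc_right hz.2)) hF (hpF.mono_set (by
          simpa only [uIcc_of_le hz.1, uIcc_of_le hab.le] using Icc_subset_Icc_right hz.2))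
  have hhF : IntervalIntegrable (fun s => h s * F s) volume a b :=
    (hmin b (right_mem_Icc.2 hab.le)).congr fun s hs => by
      rw [uIoc_of_le hab.le] at hs
      simp only [min_eq_right hs.2]
  have hyx : y x = y a + p b * deriv y b * h x + ∫ s in a..b, h (min x s) * F s := by
    simpa only [← hh] using hy.eq_add_flux_mul_add_integral_min hpb hp0 hint hF hpF hx
  rw [hyx, hy.flux_eq_of_robin hab hpb hp0 hint hF hpF hh hμ hμ0 hbc,
    integral_dirichletRobinGreen_mul α μ (hmin x hx) hhF]
  ring

theorem solution_satisfies_fredholm_dirichlet_robin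
    (p q : ℝ → ℝ) (f : ℝ → ℝ → ℝ) (y : ℝ → ℝ)
    (δ₁ α₁ β₁ γ₁ μ : ℝ) (h : ℝ → ℝ)
    -- (C₁)
    (hpC : ContinuousOn p (Set.Icc 0 1))
    (hpd : ∀ x ∈ Set.Ioc (0:ℝ) 1, DifferentiableAt ℝ p x)
    (hpp : ∀ x ∈ Set.Ioc (0:ℝ) 1, 0 < p x)
    (hqp : ∀ x ∈ Set.Ioc (0:ℝ) 1, 0 < q x)
    (hqc : ContinuousOn q (Set.Ioc 0 1))
    -- (C₂)
    (hint : IntervalIntegrable (fun t => 1 / p t) volume 0 1)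
    (hdouble : IntervalIntegrable
      (fun x => (1 / p x) * ∫ s in x..(1:ℝ), q s) volume 0 1)
    -- h and μ
    (hh : ∀ x, h x = ∫ t in (0:ℝ)..x, 1 / p t)
    (hμ : μ = α₁ * h 1 + β₁ / p 1) (hμ0 : μ ≠ 0)
    -- f continuous and bounded along the solution
    (hfc : ContinuousOn (fun x => f x (y x)) (Set.Ioc 0 1))
    (hfb : ∃ C : ℝ, ∀ x ∈ Set.Ioc (0:ℝ) 1, |f x (y x)| ≤ C)
    -- y solves the singular BVP
    (hyc : ContinuousOn y (Set.Icc 0 1))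
    (hyd : ∀ x ∈ Set.Ioc (0:ℝ) 1, DifferentiableAt ℝ y x)
    (hode : ∀ x ∈ Set.Ioo (0:ℝ) 1,
      HasDerivAt (fun t => p t * deriv y t) (-(q x * f x (y x))) x)
    (hbc0 : y 0 = δ₁)
    (hbc1 : α₁ * y 1 + β₁ * deriv y 1 = γ₁) :
    ∀ x ∈ Set.Icc (0:ℝ) 1,
      y x = δ₁ + ((γ₁ - δ₁ * α₁) / μ) * h x +
        ∫ s in (0:ℝ)..1,
          (h (min x s) * (1 - α₁ * h (max x s) / μ)) * q s * f s (y s) := by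
  obtain ⟨C, hC⟩ := hfb
  have hF : LocallyIntegrableOn (fun x => q x * f x (y x)) (Ioc 0 1) :=
    (hqc.mul hfc).locallyIntegrableOn measurableSet_Ioc
  have hFq : ∀ x ∈ Ioc (0 : ℝ) 1, |q x * f x (y x)| ≤ C * q x := fun x hx => by
    rw [abs_mul, abs_of_pos (hqp x hx), mul_comm]
    exact mul_le_mul_of_nonneg_right (hC x hx) (hqp x hx).le
  have hpF := intervalIntegrable_mul_integral_abs_of_abs_le zero_le_one
    hint.1.aestronglyMeasurable hF (hqc.locallyIntegrableOn measurableSet_Ioc) hFq hdouble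
  have hpb : ContinuousWithinAt p (Iio 1) 1 :=
    (hpd 1 (right_mem_Ioc.2 one_pos)).continuousAt.continuousWithinAt
  simpa only [dirichletRobinGreen, mul_assoc, hbc0] using
    solution_satisfies_fredholm_dirichlet_robin_general one_pos hpb (fun x hx => (hpp x hx).ne')
      hint hF hpF hh hμ hμ0 ⟨hyc, hyd, hode⟩ hbc1
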